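/- arXiv:2510.04770 — 8 statements merged into one kernel-verified Lean document; each statement's English description precedes it below -/
import Mathlib

section
/- Let (Ω, μ) be a probability space, let m ≥ 1 be a natural number, and let γ : Ω → ℝ be a nonnegative measurable function such that μ({ω : γ(ω) ≥ x}) ≤ 2·exp(−2·m·x²) for every real x ≥ 0. Then the integral ∫_Ω exp((2m−1)·γ(ω)²) dμ(ω) is at most 4m. -/
open MeasureTheory
open scoped ENNReal

/-! If `X` has the Gaussian tail `c * exp (-b * x ^ 2)`, then `exp (a * X ^ 2)` has the power tail
`c * t ^ (-(b / a))`, whose exponent is integrable at infinity exactly when `a < b`. The layer cake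
formula bounds the integral by the total mass, for the levels `t ≤ 1`, plus the integral
`c * a / (b - a)` of this tail over `t > 1`. With `a = 2 * m - 1`, `b = 2 * m` and `c = 2` the two
terms add up to `4 * m - 1`. -/

theorem lintegral_Ioi_ofReal_rpow {r s : ℝ} (hr : r < -1) (hs : 0 < s) :
    ∫⁻ t in Set.Ioi s, ENNReal.ofReal (t ^ r) = ENNReal.ofReal (-s ^ (r + 1) / (r + 1)) := by
  rw [← integral_Ioi_rpow_of_lt hr hs]
  refine (ofReal_integral_eq_lintegral_ofReal (integrableOn_Ioi_rpow_of_lt hr hs) ?_).symm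
  filter_upwards [ae_restrict_mem measurableSet_Ioi] with t ht
  exact Real.rpow_nonneg (hs.trans ht).le r

section TailBounds

variable {Ω : Type*} [MeasurableSpace Ω] {μ : Measure Ω}

theorem lintegral_ofReal_le_lintegral_measure_le (f : Ω → ℝ) :
    ∫⁻ ω, ENNReal.ofReal (f ω) ∂μ ≤ ∫⁻ t in Set.Ioi 0, μ {ω | t ≤ f ω} := by
  -- `∫⁻` is attained at a measurable minorant, to which the layer cake formula applies.
  obtain ⟨g, hg, g_le, lintegral_g⟩ :=
    exists_measurable_le_lintegral_eq μ fun ω ↦ ENNReal.ofReal (f ω)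
  have g_ne_top : ∀ ω, g ω ≠ ∞ := fun ω ↦ ne_top_of_le_ne_top ENNReal.ofReal_ne_top (g_le ω)
  have le_f_of_le_g : ∀ t, 0 < t → ∀ ω, t ≤ (g ω).toReal → t ≤ f ω := by
    intro t t_pos ω ht
    have ofReal_t_le : ENNReal.ofReal t ≤ ENNReal.ofReal (f ω) :=
      ((ENNReal.ofReal_le_iff_le_toReal (g_ne_top ω)).2 ht).trans (g_le ω)
    exact (ENNReal.ofReal_le_ofReal_iff'.1 ofReal_t_le).resolve_right t_pos.not_ge
  calc
    ∫⁻ ω, ENNReal.ofReal (f ω) ∂μ = ∫⁻ ω, ENNReal.ofReal (g ω).toReal ∂μ := by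
      simp only [lintegral_g, ENNReal.ofReal_toReal (g_ne_top _)]
    _ = ∫⁻ t in Set.Ioi 0, μ {ω | t ≤ (g ω).toReal} :=
      lintegral_eq_lintegral_meas_le μ (.of_forall fun _ ↦ ENNReal.toReal_nonneg)
        hg.ennreal_toReal.aemeasurable
    _ ≤ ∫⁻ t in Set.Ioi 0, μ {ω | t ≤ f ω} :=
      setLIntegral_mono' measurableSet_Ioi fun t t_pos ↦ measure_mono (le_f_of_le_g t t_pos)

theorem lintegral_ofReal_le_mul_measure_univ_add_lintegral_Ioi (f : Ω → ℝ) {s : ℝ}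
    (hs : 0 ≤ s) :
    ∫⁻ ω, ENNReal.ofReal (f ω) ∂μ ≤
      ENNReal.ofReal s * μ Set.univ + ∫⁻ t in Set.Ioi s, μ {ω | t ≤ f ω} := by
  have low_levels : ∫⁻ t in Set.Ioc 0 s, μ {ω | t ≤ f ω} ≤ ENNReal.ofReal s * μ Set.univ :=
    calc
      ∫⁻ t in Set.Ioc 0 s, μ {ω | t ≤ f ω} ≤ ∫⁻ _ in Set.Ioc 0 s, μ Set.univ :=
        lintegral_mono fun _ ↦ measure_mono (Set.subset_univ _)
      _ = ENNReal.ofReal s * μ Set.univ := by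
        rw [setLIntegral_const, Real.volume_Ioc, sub_zero, mul_comm]
  calc
    ∫⁻ ω, ENNReal.ofReal (f ω) ∂μ ≤ ∫⁻ t in Set.Ioc 0 s ∪ Set.Ioi s, μ {ω | t ≤ f ω} := by
      rw [Set.Ioc_union_Ioi_eq_Ioi hs]
      exact lintegral_ofReal_le_lintegral_measure_le f
    _ ≤ (∫⁻ t in Set.Ioc 0 s, μ {ω | t ≤ f ω}) + ∫⁻ t in Set.Ioi s, μ {ω | t ≤ f ω} :=
      lintegral_union_le _ _ _
    _ ≤ ENNReal.ofReal s * μ Set.univ + ∫⁻ t in Set.Ioi s, μ {ω | t ≤ f ω} := by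
      gcongr

theorem lintegral_ofReal_le_of_rpow_tail {f : Ω → ℝ} {c p : ℝ} (hp : 1 < p)
    (htail : ∀ t, 1 < t → μ {ω | t ≤ f ω} ≤ ENNReal.ofReal (c * t ^ (-p))) :
    ∫⁻ ω, ENNReal.ofReal (f ω) ∂μ ≤ μ Set.univ + ENNReal.ofReal (c / (p - 1)) := by
  have high_levels : ∫⁻ t in Set.Ioi 1, μ {ω | t ≤ f ω} ≤ ENNReal.ofReal (c / (p - 1)) :=
    calc
      ∫⁻ t in Set.Ioi 1, μ {ω | t ≤ f ω}
          ≤ ∫⁻ t in Set.Ioi 1, ENNReal.ofReal c * ENNReal.ofReal (t ^ (-p)) := by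
        refine setLIntegral_mono' measurableSet_Ioi fun t ht ↦ ?_
        rw [← ENNReal.ofReal_mul' (Real.rpow_nonneg (zero_lt_one.trans ht).le _)]
        exact htail t ht
      _ = ENNReal.ofReal c * ENNReal.ofReal (1 / (p - 1)) := by
        rw [lintegral_const_mul' _ _ ENNReal.ofReal_ne_top,
          lintegral_Ioi_ofReal_rpow (neg_lt_neg hp) one_pos, Real.one_rpow, neg_add_eq_sub,
          ← neg_sub p 1, neg_div_neg_eq]
      _ = ENNReal.ofReal (c / (p - 1)) := by
        rw [← ENNReal.ofReal_mul' (one_div_nonneg.2 (sub_pos.2 hp).le), mul_one_div]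
  calc
    ∫⁻ ω, ENNReal.ofReal (f ω) ∂μ
        ≤ ENNReal.ofReal 1 * μ Set.univ + ∫⁻ t in Set.Ioi 1, μ {ω | t ≤ f ω} :=
      lintegral_ofReal_le_mul_measure_univ_add_lintegral_Ioi f zero_le_one
    _ ≤ μ Set.univ + ENNReal.ofReal (c / (p - 1)) := by
      rw [ENNReal.ofReal_one, one_mul]
      gcongr

theorem measure_le_exp_mul_sq_le_of_gaussian_tail {X : Ω → ℝ} {a b c : ℝ} (ha : 0 < a)
    (htail : ∀ x, 0 ≤ x → μ {ω | x ≤ |X ω|} ≤ ENNReal.ofReal (c * Real.exp (-b * x ^ 2)))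
    {t : ℝ} (ht : 1 ≤ t) :
    μ {ω | t ≤ Real.exp (a * X ω ^ 2)} ≤ ENNReal.ofReal (c * t ^ (-(b / a))) := by
  have t_pos : 0 < t := zero_lt_one.trans_le ht
  set x := √(Real.log t / a) with hx
  have x_sq : x ^ 2 = Real.log t / a := Real.sq_sqrt (div_nonneg (Real.log_nonneg ht) ha.le)
  have le_exp_iff : ∀ ω, t ≤ Real.exp (a * X ω ^ 2) ↔ x ≤ |X ω| := fun ω ↦ by
    rw [← Real.log_le_iff_le_exp t_pos, ← div_le_iff₀' ha, ← Real.sqrt_sq_eq_abs, hx,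
      Real.sqrt_le_sqrt_iff (sq_nonneg _)]
  have tail_at_level : Real.exp (-b * x ^ 2) = t ^ (-(b / a)) := by
    rw [Real.rpow_def_of_pos t_pos, x_sq]
    ring_nf
  simp only [le_exp_iff, ← tail_at_level]
  exact htail x (Real.sqrt_nonneg _)

theorem tail_bound_implies_moment_bound_general {X : Ω → ℝ} {a b c : ℝ} (ha : 0 < a)
    (hab : a < b)
    (htail : ∀ x, 0 ≤ x → μ {ω | x ≤ |X ω|} ≤ ENNReal.ofReal (c * Real.exp (-b * x ^ 2))) :
    ∫⁻ ω, ENNReal.ofReal (Real.exp (a * X ω ^ 2)) ∂μ ≤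
      μ Set.univ + ENNReal.ofReal (c * a / (b - a)) := by
  have tail_integral : c / (b / a - 1) = c * a / (b - a) := by
    rw [div_sub_one ha.ne', div_div_eq_mul_div]
  rw [← tail_integral]
  exact lintegral_ofReal_le_of_rpow_tail ((one_lt_div ha).2 hab) fun _ ht ↦
    measure_le_exp_mul_sq_le_of_gaussian_tail ha htail ht.le

end TailBounds

/-- Moment bound from a Chernoff-type tail bound: if `μ(γ ≥ x) ≤ 2·exp(−2mx²)` for all
`x ≥ 0`, then `∫ exp((2m−1)γ²) dμ ≤ 4m`. -/
theorem tail_bound_implies_moment_bound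
    {Ω : Type*} [MeasurableSpace Ω] (μ : Measure Ω) [IsProbabilityMeasure μ]
    (m : ℕ) (hm : 1 ≤ m)
    (γ : Ω → ℝ) (hmeas : Measurable γ) (hnn : ∀ ω, 0 ≤ γ ω)
    (htail : ∀ x : ℝ, 0 ≤ x →
      μ {ω | x ≤ γ ω} ≤ ENNReal.ofReal (2 * Real.exp (-2 * (m : ℝ) * x ^ 2))) :
    ∫⁻ ω, ENNReal.ofReal (Real.exp ((2 * (m : ℝ) - 1) * (γ ω) ^ 2)) ∂μ
      ≤ ((4 * m : ℕ) : ℝ≥0∞) := by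
  have one_le_m : (1 : ℝ) ≤ m := by exact_mod_cast hm
  have abs_tail : ∀ x : ℝ, 0 ≤ x →
      μ {ω | x ≤ |γ ω|} ≤ ENNReal.ofReal (2 * Real.exp (-(2 * (m : ℝ)) * x ^ 2)) := by
    simpa only [abs_of_nonneg (hnn _), neg_mul] using htail
  calc
    ∫⁻ ω, ENNReal.ofReal (Real.exp ((2 * (m : ℝ) - 1) * γ ω ^ 2)) ∂μ
        ≤ μ Set.univ + ENNReal.ofReal (2 * (2 * m - 1) / (2 * m - (2 * m - 1))) :=
      tail_bound_implies_moment_bound_general (by linarith) (by linarith) abs_tail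
    _ = ENNReal.ofReal (4 * m - 1) := by
      rw [measure_univ, sub_sub_cancel, div_one, ← ENNReal.ofReal_one,
        ← ENNReal.ofReal_add zero_le_one (by linarith)]
      ring_nf
    _ ≤ ((4 * m : ℕ) : ℝ≥0∞) := by
      rw [← ENNReal.ofReal_natCast]
      exact ENNReal.ofReal_le_ofReal (by push_cast; linarith)
end

section
/- Let (Ω, μ) be a probability space, m ≥ 1 a natural number, δ ∈ (0,1] a real number, I a finite index set, S a probability mass function on I, and for each i ∈ I let γ_i : Ω → ℝ be a nonnegative measurable function such that μ({ω : γ_i(ω) ≥ x}) ≤ 2·exp(−2·m·x²) for every real x ≥ 0. Then μ({ω : ∑_{i∈I} S i · exp((2m−1)·γ_i(ω)²) ≥ 4m/δ}) ≤ δ. -/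
open MeasureTheory
open scoped ENNReal

/-!
By the layer-cake formula, a nonnegative `f` with Gaussian tail `μ {x ≤ f} ≤ C exp (-b x²)`
satisfies, for `0 ≤ a < b`,
`∫ exp (a f²) ≤ μ Ω + C ∫₀^∞ 2 a t exp (-(b - a) t²) dt = μ Ω + C a / (b - a)`.
The tail bound at `x = 0` gives `μ Ω ≤ C`, so the exponential moment is at most `C b / (b - a)`,
which is exactly `4 m` for `C = 2`, `b = 2 m` and `a = 2 m - 1`. Averaging over the index keeps
this bound, and Markov's inequality concludes.
-/

section ExponentialMoment

lemma integral_Ioi_mul_exp_neg_mul_sq {c : ℝ} (hc : 0 < c) :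
    ∫ t in Set.Ioi (0 : ℝ), t * Real.exp (-c * t ^ 2) = (2 * c)⁻¹ := by
  have h := integral_mul_cexp_neg_mul_sq (b := (c : ℂ)) (by simpa using hc)
  exact_mod_cast h

lemma intervalIntegral_two_mul_mul_exp_mul_sq (a x : ℝ) :
    ∫ t in (0 : ℝ)..x, 2 * a * t * Real.exp (a * t ^ 2) = Real.exp (a * x ^ 2) - 1 := by
  have hderiv (t : ℝ) : HasDerivAt (fun t ↦ Real.exp (a * t ^ 2))
      (2 * a * t * Real.exp (a * t ^ 2)) t := by
    convert! ((hasDerivAt_pow 2 t).const_mul a).exp using 1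
    simp only [Nat.cast_ofNat, Nat.add_one_sub_one, pow_one]
    ring
  rw [intervalIntegral.integral_eq_sub_of_hasDerivAt (fun t _ ↦ hderiv t)
    (Continuous.intervalIntegrable (by fun_prop) 0 x)]
  simp

variable {Ω : Type*} [MeasurableSpace Ω] {μ : Measure Ω} {f : Ω → ℝ} {a b : ℝ}

lemma lintegral_exp_mul_sq_eq_add_lintegral_meas_le (hf : AEMeasurable f μ) (hf0 : 0 ≤ᵐ[μ] f)
    (ha : 0 ≤ a) :
    ∫⁻ ω, ENNReal.ofReal (Real.exp (a * f ω ^ 2)) ∂μ =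
      μ Set.univ + ∫⁻ t in Set.Ioi (0 : ℝ),
        μ {ω | t ≤ f ω} * ENNReal.ofReal (2 * a * t * Real.exp (a * t ^ 2)) := by
  have hsplit (ω : Ω) : ENNReal.ofReal (Real.exp (a * f ω ^ 2)) =
      1 + ENNReal.ofReal (∫ t in (0 : ℝ)..f ω, 2 * a * t * Real.exp (a * t ^ 2)) := by
    have hexp : 0 ≤ Real.exp (a * f ω ^ 2) - 1 := sub_nonneg.2 (Real.one_le_exp (by positivity))
    rw [intervalIntegral_two_mul_mul_exp_mul_sq, ← ENNReal.ofReal_one,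
      ← ENNReal.ofReal_add zero_le_one hexp, add_sub_cancel]
  have hlayer := lintegral_comp_eq_lintegral_meas_le_mul μ hf0 hf
    (g := fun t ↦ 2 * a * t * Real.exp (a * t ^ 2))
    (fun t _ ↦ Continuous.intervalIntegrable (by fun_prop) 0 t)
    (ae_restrict_of_forall_mem measurableSet_Ioi fun t (ht : 0 < t) ↦ by positivity)
  simp_rw [hsplit]
  rw [lintegral_add_left measurable_const, lintegral_one, hlayer]

lemma lintegral_Ioi_exp_neg_mul_sq_mul (ha : 0 ≤ a) (hab : a < b) :
    ∫⁻ t in Set.Ioi (0 : ℝ), ENNReal.ofReal (Real.exp (-b * t ^ 2)) *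
      ENNReal.ofReal (2 * a * t * Real.exp (a * t ^ 2)) = ENNReal.ofReal (a / (b - a)) := by
  have hba : 0 < b - a := sub_pos.2 hab
  have hmul (t : ℝ) : ENNReal.ofReal (Real.exp (-b * t ^ 2)) *
      ENNReal.ofReal (2 * a * t * Real.exp (a * t ^ 2)) =
        ENNReal.ofReal (2 * a * (t * Real.exp (-(b - a) * t ^ 2))) := by
    rw [← ENNReal.ofReal_mul (Real.exp_pos _).le,
      show -(b - a) * t ^ 2 = -b * t ^ 2 + a * t ^ 2 by ring, Real.exp_add]
    ring_nf
  simp_rw [hmul]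
  rw [← ofReal_integral_eq_lintegral_ofReal
      ((integrable_mul_exp_neg_mul_sq hba).integrableOn.const_mul _)
      (ae_restrict_of_forall_mem measurableSet_Ioi fun t (ht : 0 < t) ↦ by positivity),
    integral_const_mul, integral_Ioi_mul_exp_neg_mul_sq hba]
  congr 1
  field_simp

lemma lintegral_exp_mul_sq_le_of_gaussian_tail {C : ℝ≥0∞} (hf : AEMeasurable f μ)
    (hf0 : 0 ≤ᵐ[μ] f) (ha : 0 ≤ a) (hab : a < b)
    (htail : ∀ x : ℝ, 0 ≤ x → μ {ω | x ≤ f ω} ≤ C * ENNReal.ofReal (Real.exp (-b * x ^ 2))) :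
    ∫⁻ ω, ENNReal.ofReal (Real.exp (a * f ω ^ 2)) ∂μ ≤ C * ENNReal.ofReal (b / (b - a)) := by
  have hba : 0 < b - a := sub_pos.2 hab
  have hmass : μ Set.univ ≤ C := by
    rw [← measure_congr (Filter.eventuallyEq_univ.2 hf0)]
    simpa using htail 0 le_rfl
  calc ∫⁻ ω, ENNReal.ofReal (Real.exp (a * f ω ^ 2)) ∂μ
      = μ Set.univ + ∫⁻ t in Set.Ioi (0 : ℝ),
          μ {ω | t ≤ f ω} * ENNReal.ofReal (2 * a * t * Real.exp (a * t ^ 2)) :=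
        lintegral_exp_mul_sq_eq_add_lintegral_meas_le hf hf0 ha
    _ ≤ C + ∫⁻ t in Set.Ioi (0 : ℝ), C * (ENNReal.ofReal (Real.exp (-b * t ^ 2)) *
          ENNReal.ofReal (2 * a * t * Real.exp (a * t ^ 2))) := by
        refine add_le_add hmass (setLIntegral_mono' measurableSet_Ioi fun t ht ↦ ?_)
        rw [← mul_assoc]
        gcongr
        exact htail t (le_of_lt ht)
    _ = C + C * ENNReal.ofReal (a / (b - a)) := by
        rw [lintegral_const_mul _ (by fun_prop), lintegral_Ioi_exp_neg_mul_sq_mul ha hab]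
    _ = C * ENNReal.ofReal (b / (b - a)) := by
        rw [← mul_one_add, ← ENNReal.ofReal_one,
          ← ENNReal.ofReal_add zero_le_one (div_nonneg ha hba.le)]
        congr 2
        field_simp
        ring

end ExponentialMoment

section Series

variable {Ω : Type*} [MeasurableSpace Ω] {μ : Measure Ω} {I : Type*} [Countable I]

lemma lintegral_tsum_mul_le_tsum_mul (w : I → ℝ≥0∞) {F : I → Ω → ℝ≥0∞} {K : ℝ≥0∞}
    (hF : ∀ i, AEMeasurable (F i) μ) (hK : ∀ i, ∫⁻ ω, F i ω ∂μ ≤ K) :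
    ∫⁻ ω, ∑' i, w i * F i ω ∂μ ≤ (∑' i, w i) * K := by
  rw [lintegral_tsum fun i ↦ (hF i).const_mul (w i), ← ENNReal.tsum_mul_right]
  refine ENNReal.tsum_le_tsum fun i ↦ ?_
  rw [lintegral_const_mul'' _ (hF i)]
  gcongr
  exact hK i

variable {X : I → Ω → ℝ}

lemma ae_summable_of_lintegral_tsum_ofReal_ne_top (hX : ∀ i, AEMeasurable (X i) μ)
    (hX0 : ∀ i, 0 ≤ᵐ[μ] X i) (hfin : ∫⁻ ω, ∑' i, ENNReal.ofReal (X i ω) ∂μ ≠ ∞) :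
    ∀ᵐ ω ∂μ, Summable fun i ↦ X i ω := by
  have hmeas : AEMeasurable (fun ω ↦ ∑' i, ENNReal.ofReal (X i ω)) μ :=
    AEMeasurable.tsum fun i ↦ (hX i).ennreal_ofReal
  filter_upwards [ae_lt_top' hmeas hfin, ae_all_iff.2 hX0] with ω hω hω0
  exact (ENNReal.summable_toReal hω.ne).congr fun i ↦ ENNReal.toReal_ofReal (hω0 i)

lemma measure_div_le_tsum_le_ofReal {K δ : ℝ} (hK : 0 < K) (hδ : 0 < δ)
    (hX : ∀ i, AEMeasurable (X i) μ) (hX0 : ∀ i, 0 ≤ᵐ[μ] X i)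
    (hint : ∫⁻ ω, ∑' i, ENNReal.ofReal (X i ω) ∂μ ≤ ENNReal.ofReal K) :
    μ {ω | K / δ ≤ ∑' i, X i ω} ≤ ENNReal.ofReal δ := by
  have hKδ : 0 < K / δ := div_pos hK hδ
  have hsum := ae_summable_of_lintegral_tsum_ofReal_ne_top hX hX0
    (hint.trans_lt ENNReal.ofReal_lt_top).ne
  calc μ {ω | K / δ ≤ ∑' i, X i ω}
      ≤ μ {ω | ENNReal.ofReal (K / δ) ≤ ∑' i, ENNReal.ofReal (X i ω)} := by
        refine measure_mono_ae ?_
        filter_upwards [hsum, ae_all_iff.2 hX0] with ω hω hω0 (hle : K / δ ≤ ∑' i, X i ω)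
        exact (ENNReal.ofReal_le_ofReal hle).trans_eq (ENNReal.ofReal_tsum_of_nonneg hω0 hω)
    _ ≤ (∫⁻ ω, ∑' i, ENNReal.ofReal (X i ω) ∂μ) / ENNReal.ofReal (K / δ) :=
        meas_ge_le_lintegral_div (AEMeasurable.tsum fun i ↦ (hX i).ennreal_ofReal)
          (ENNReal.ofReal_pos.2 hKδ).ne' ENNReal.ofReal_ne_top
    _ ≤ ENNReal.ofReal K / ENNReal.ofReal (K / δ) := ENNReal.div_le_div_right hint _
    _ = ENNReal.ofReal δ := by rw [← ENNReal.ofReal_div_of_pos hKδ, div_div_cancel₀ hK.ne']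

end Series

/-- Almost sure summability keeps the event from being read off the junk value `0` of `∑'`. -/
theorem weighted_exp_moment_markov_bound_general
    {Ω : Type*} [MeasurableSpace Ω] {μ : Measure Ω} {I : Type*} [Countable I]
    {m δ : ℝ} (hm : 1 / 2 ≤ m) (hδ : 0 < δ)
    {S : I → ℝ} (hS0 : ∀ i, 0 ≤ S i) (hS1 : HasSum S 1)
    {γ : I → Ω → ℝ} (hγ : ∀ i, AEMeasurable (γ i) μ) (hγ0 : ∀ i, 0 ≤ᵐ[μ] γ i)
    (htail : ∀ i, ∀ x : ℝ, 0 ≤ x →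
      μ {ω | x ≤ γ i ω} ≤ ENNReal.ofReal (2 * Real.exp (-2 * m * x ^ 2))) :
    (∀ᵐ ω ∂μ, Summable fun i ↦ S i * Real.exp ((2 * m - 1) * γ i ω ^ 2)) ∧
      μ {ω | 4 * m / δ ≤ ∑' i, S i * Real.exp ((2 * m - 1) * γ i ω ^ 2)} ≤ ENNReal.ofReal δ := by
  have hmoment (i : I) :
      ∫⁻ ω, ENNReal.ofReal (Real.exp ((2 * m - 1) * γ i ω ^ 2)) ∂μ ≤ ENNReal.ofReal (4 * m) := by
    have h := lintegral_exp_mul_sq_le_of_gaussian_tail (C := 2) (a := 2 * m - 1) (b := 2 * m)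
      (hγ i) (hγ0 i) (by linarith) (by linarith) fun x hx ↦ by
        simpa [ENNReal.ofReal_mul] using htail i x hx
    refine h.trans_eq ?_
    rw [sub_sub_cancel, div_one, ← ENNReal.ofReal_ofNat 2, ← ENNReal.ofReal_mul zero_le_two]
    ring_nf
  have hmean : ∫⁻ ω, ∑' i, ENNReal.ofReal (S i * Real.exp ((2 * m - 1) * γ i ω ^ 2)) ∂μ ≤
      ENNReal.ofReal (4 * m) := by
    simp_rw [ENNReal.ofReal_mul (hS0 _)]
    refine (lintegral_tsum_mul_le_tsum_mul _ (fun i ↦ by fun_prop) hmoment).trans_eq ?_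
    rw [← ENNReal.ofReal_tsum_of_nonneg hS0 hS1.summable, hS1.tsum_eq, ENNReal.ofReal_one, one_mul]
  have hmeas (i : I) : AEMeasurable (fun ω ↦ S i * Real.exp ((2 * m - 1) * γ i ω ^ 2)) μ := by
    fun_prop
  have hnonneg (i : I) : 0 ≤ᵐ[μ] fun ω ↦ S i * Real.exp ((2 * m - 1) * γ i ω ^ 2) :=
    ae_of_all μ fun ω ↦ mul_nonneg (hS0 i) (Real.exp_pos _).le
  exact ⟨ae_summable_of_lintegral_tsum_ofReal_ne_top hmeas hnonneg
      (hmean.trans_lt ENNReal.ofReal_lt_top).ne,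
    measure_div_le_tsum_le_ofReal (by linarith) hδ hmeas hnonneg hmean⟩

/-- Lemma 2: with probability at least `1 − δ`,
`∑ i, S i · exp((2m−1)·γ_i²) ≤ 4m/δ`. -/
theorem weighted_exp_moment_markov_bound
    {Ω : Type*} [MeasurableSpace Ω] (μ : Measure Ω) [IsProbabilityMeasure μ]
    {I : Type*} [Fintype I]
    (m : ℕ) (hm : 1 ≤ m)
    (δ : ℝ) (hδ0 : 0 < δ) (hδ1 : δ ≤ 1)
    (S : I → ℝ) (hS0 : ∀ i, 0 ≤ S i) (hS1 : ∑ i, S i = 1)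
    (γ : I → Ω → ℝ) (hmeas : ∀ i, Measurable (γ i)) (hnn : ∀ i ω, 0 ≤ γ i ω)
    (htail : ∀ i, ∀ x : ℝ, 0 ≤ x →
      μ {ω | x ≤ γ i ω} ≤ ENNReal.ofReal (2 * Real.exp (-2 * (m : ℝ) * x ^ 2))) :
    μ {ω | 4 * (m : ℝ) / δ ≤ ∑ i, S i * Real.exp ((2 * (m : ℝ) - 1) * (γ i ω) ^ 2)}
      ≤ ENNReal.ofReal δ := by
  have hm' : (1 : ℝ) ≤ m := by exact_mod_cast hm
  simpa only [tsum_fintype] using (weighted_exp_moment_markov_bound_general (by linarith) hδ0 hS0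
    (hS1 ▸ hasSum_fintype S) (fun i ↦ (hmeas i).aemeasurable) (fun i ↦ ae_of_all μ (hnn i)) htail).2
end

section
/- Let I be a finite index set, m ≥ 1 a natural number, δ ∈ (0,1], S a pmf on I with S i > 0 for every i ∈ I, E a pmf on I, and λ > 0 a real number. Suppose Δ : I → ℝ satisfies Δ i ≥ 0 and 2·(2m−1)·(Δ i)·exp((2m−1)·(Δ i)²) = λ·(E i)/(S i) for every i ∈ I, and that ∑_{i∈I} S i·exp((2m−1)·(Δ i)²) = 4m/δ. Then every γ : I → ℝ satisfying ∑_{i∈I} S i·exp((2m−1)·(γ i)²) ≤ 4m/δ also satisfies ∑_{i∈I} (E i)·(γ i) ≤ ∑_{i∈I} (E i)·(Δ i). -/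
/-!
For `0 ≤ c` the function `t ↦ exp (c * t ^ 2)` lies above its tangent lines. Stationarity says that
the tangent at `Δ i` of the `i`-th constraint term has slope `lam * E i`. Summing the tangent
inequalities, moving from `Δ` to `γ` raises the constraint by at least `lam` times the gain in the
objective; since `Δ` already saturates the constraint, a feasible `γ` gains nothing.
-/

theorem sum_mul_le_sum_mul_of_tangent_le {ι R : Type*} [Ring R] [LinearOrder R]
    [IsStrictOrderedRing R] {s : Finset ι} {f : ι → R → R} {a x y : ι → R} {lam : R}
    (hlam : 0 < lam)
    (htangent : ∀ i ∈ s, f i (x i) + lam * a i * (y i - x i) ≤ f i (y i))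
    (hle : ∑ i ∈ s, f i (y i) ≤ ∑ i ∈ s, f i (x i)) :
    ∑ i ∈ s, a i * y i ≤ ∑ i ∈ s, a i * x i := by
  have hgain : ∑ i ∈ s, f i (x i) + lam * (∑ i ∈ s, a i * y i - ∑ i ∈ s, a i * x i) ≤
      ∑ i ∈ s, f i (x i) :=
    calc
      _ = ∑ i ∈ s, (f i (x i) + lam * a i * (y i - x i)) := by
        simp only [Finset.sum_add_distrib, Finset.sum_sub_distrib, Finset.mul_sum, mul_sub,
          mul_assoc]
      _ ≤ ∑ i ∈ s, f i (y i) := Finset.sum_le_sum htangent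
      _ ≤ _ := hle
  have hnonpos := nonpos_of_mul_nonpos_right (add_le_iff_nonpos_right _ |>.mp hgain) hlam
  exact sub_nonpos.mp hnonpos

theorem exp_mul_sq_add_tangent_le {c : ℝ} (hc : 0 ≤ c) (x y : ℝ) :
    Real.exp (c * x ^ 2) + 2 * c * x * Real.exp (c * x ^ 2) * (y - x) ≤ Real.exp (c * y ^ 2) := by
  have hexponent : 2 * c * x * (y - x) ≤ c * y ^ 2 - c * x ^ 2 := by
    linear_combination mul_nonneg hc (sq_nonneg (y - x))
  calc
    _ = Real.exp (c * x ^ 2) * (2 * c * x * (y - x) + 1) := by ring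
    _ ≤ Real.exp (c * x ^ 2) * Real.exp (c * y ^ 2 - c * x ^ 2) := by
      gcongr
      exact (add_le_add_left hexponent 1).trans (Real.add_one_le_exp _)
    _ = Real.exp (c * y ^ 2) := by rw [← Real.exp_add, add_sub_cancel]

theorem lagrange_point_maximizes_general {I : Type*} {s : Finset I} {c : ℝ} (hc : 0 ≤ c)
    {S : I → ℝ} (hS : ∀ i ∈ s, 0 ≤ S i) {E : I → ℝ} {lam : ℝ} (hlam : 0 < lam) {Δ γ : I → ℝ}
    (hstat : ∀ i ∈ s, S i * (2 * c * Δ i * Real.exp (c * Δ i ^ 2)) = lam * E i)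
    (hγ : ∑ i ∈ s, S i * Real.exp (c * γ i ^ 2) ≤ ∑ i ∈ s, S i * Real.exp (c * Δ i ^ 2)) :
    ∑ i ∈ s, E i * γ i ≤ ∑ i ∈ s, E i * Δ i := by
  refine sum_mul_le_sum_mul_of_tangent_le (f := fun i t ↦ S i * Real.exp (c * t ^ 2)) hlam
    (fun i hi ↦ ?_) hγ
  rw [← hstat i hi, mul_assoc (S i), ← mul_add]
  exact mul_le_mul_of_nonneg_left (exp_mul_sq_add_tangent_le hc (Δ i) (γ i)) (hS i hi)

/-- The Lagrange stationary point `Δ` maximizes `∑ i, E i · γ i` over all `γ`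
satisfying the constraint `∑ i, S i · exp((2m−1)·γ_i²) ≤ 4m/δ`. -/
theorem lagrange_point_maximizes
    {I : Type*} [Fintype I]
    (m : ℕ) (hm : 1 ≤ m)
    (δ : ℝ) (hδ0 : 0 < δ) (hδ1 : δ ≤ 1)
    (S : I → ℝ) (hS0 : ∀ i, 0 < S i) (hS1 : ∑ i, S i = 1)
    (E : I → ℝ) (hE0 : ∀ i, 0 ≤ E i) (hE1 : ∑ i, E i = 1)
    (lam : ℝ) (hlam : 0 < lam)
    (Δ : I → ℝ) (hΔ0 : ∀ i, 0 ≤ Δ i)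
    (hstat : ∀ i, 2 * (2 * (m : ℝ) - 1) * Δ i * Real.exp ((2 * (m : ℝ) - 1) * (Δ i) ^ 2)
      = lam * E i / S i)
    (hsat : ∑ i, S i * Real.exp ((2 * (m : ℝ) - 1) * (Δ i) ^ 2) = 4 * (m : ℝ) / δ)
    (γ : I → ℝ)
    (hγ : ∑ i, S i * Real.exp ((2 * (m : ℝ) - 1) * (γ i) ^ 2) ≤ 4 * (m : ℝ) / δ) :
    ∑ i, E i * γ i ≤ ∑ i, E i * Δ i := by
  have hc : 0 ≤ 2 * (m : ℝ) - 1 := by linarith [Nat.one_le_cast (α := ℝ).mpr hm]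
  exact lagrange_point_maximizes_general hc (fun i _ ↦ (hS0 i).le) hlam
    (fun i _ ↦ by rw [hstat i, mul_div_cancel₀ _ (hS0 i).ne']) (hγ.trans_eq hsat.symm)
end

section
/- Let m ≥ 1 be a natural number and let s, ε, λ be real numbers with s > 0, ε ≥ s and λ ≥ e. If Δ ≥ 0 is a real number satisfying 2·(2m−1)·Δ·exp((2m−1)·Δ²) = λ·ε/s, then Δ ≤ √(ln(λ·ε/s)/(2m−1)). -/
/-!
Put `k = 2m - 1` and `y = λε/s`. Since `2kΔ · exp (kΔ²) = y`, the claimed bound `kΔ² ≤ log y`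
amounts to `1 ≤ 2kΔ`. If instead `2kΔ < 1`, then `kΔ² = (2kΔ)² / (4k) ≤ 1 / (4k)`, and hence
`y < exp (1 / (4k))`, which for `k ≥ 1/4` contradicts `e ≤ y`.
-/

section OrderedField

variable {𝕜 : Type*} [Field 𝕜] [LinearOrder 𝕜] [IsStrictOrderedRing 𝕜] {a b c k x : 𝕜}

theorem le_mul_div_of_le (ha : 0 ≤ a) (hc : 0 < c) (hcb : c ≤ b) : a ≤ a * b / c := by
  rw [mul_div_assoc]
  exact le_mul_of_one_le_right ha ((one_le_div hc).2 hcb)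

theorem mul_sq_le_inv_four_mul (hk : 0 < k) (hx : 0 ≤ x) (h : 2 * k * x ≤ 1) :
    k * x ^ 2 ≤ (4 * k)⁻¹ :=
  calc
    k * x ^ 2 = (2 * k * x) ^ 2 * (4 * k)⁻¹ := by field_simp; norm_num
    _ ≤ 1 * (4 * k)⁻¹ := by
      gcongr
      exact pow_le_one₀ (by positivity) h
    _ = (4 * k)⁻¹ := one_mul _

end OrderedField

section Real

variable {k x y : ℝ}

theorem exp_inv_four_mul_le_exp_one (hk : 1 ≤ 4 * k) : Real.exp (4 * k)⁻¹ ≤ Real.exp 1 :=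
  Real.exp_le_exp.2 (inv_le_one_of_one_le₀ hk)

theorem le_sqrt_log_div_of_exp_mul_sq_le (hk : 0 < k) (h : Real.exp (k * x ^ 2) ≤ y) :
    x ≤ Real.sqrt (Real.log y / k) := by
  apply Real.le_sqrt_of_sq_le
  rw [le_div_iff₀' hk]
  exact (Real.le_log_iff_exp_le ((Real.exp_pos _).trans_le h)).2 h

theorem one_le_two_mul_mul_of_exp_inv_four_mul_le (hk : 0 < k)
    (h : Real.exp (4 * k)⁻¹ ≤ 2 * k * x * Real.exp (k * x ^ 2)) : 1 ≤ 2 * k * x := by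
  have hkx : 0 < 2 * k * x :=
    pos_of_mul_pos_left ((Real.exp_pos _).trans_le h) (Real.exp_pos _).le
  have hx : 0 < x := pos_of_mul_pos_right hkx (by positivity)
  by_contra! hlt
  refine h.not_gt ?_
  calc
    2 * k * x * Real.exp (k * x ^ 2) < Real.exp (k * x ^ 2) :=
      mul_lt_of_lt_one_left (Real.exp_pos _) hlt
    _ ≤ Real.exp (4 * k)⁻¹ := Real.exp_le_exp.2 (mul_sq_le_inv_four_mul hk hx.le hlt.le)

theorem delta_upper_bound_general (hk : 0 < k) (hy : Real.exp (4 * k)⁻¹ ≤ y)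
    (heq : 2 * k * x * Real.exp (k * x ^ 2) = y) : x ≤ Real.sqrt (Real.log y / k) := by
  subst heq
  have hkx : 1 ≤ 2 * k * x := one_le_two_mul_mul_of_exp_inv_four_mul_le hk hy
  exact le_sqrt_log_div_of_exp_mul_sq_le hk (le_mul_of_one_le_left (Real.exp_pos _).le hkx)

end Real

/-- Lemma 3: upper bound on the implicitly defined quantity `Δ_i(λ)`. -/
theorem delta_upper_bound
    (m : ℕ) (hm : 1 ≤ m) (s ε lam : ℝ) (hs : 0 < s) (hε : s ≤ ε)
    (hlam : Real.exp 1 ≤ lam) (Δ : ℝ) (hΔ : 0 ≤ Δ)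
    (heq : 2 * (2 * (m : ℝ) - 1) * Δ * Real.exp ((2 * (m : ℝ) - 1) * Δ ^ 2)
      = lam * ε / s) :
    Δ ≤ Real.sqrt (Real.log (lam * ε / s) / (2 * (m : ℝ) - 1)) := by
  have hm_cast : (1 : ℝ) ≤ m := Nat.one_le_cast.2 hm
  have hy : Real.exp 1 ≤ lam * ε / s :=
    hlam.trans (le_mul_div_of_le ((Real.exp_pos 1).le.trans hlam) hs hε)
  exact delta_upper_bound_general (by linarith)
    ((exp_inv_four_mul_le_exp_one (by linarith)).trans hy) heq
end

section
/- Let m ≥ 1 be a natural number and let s, ε, λ be real numbers with s > 0, ε ≥ s and λ ≥ e. If Δ ≥ 0 is a real number satisfying 2·(2m−1)·Δ·exp((2m−1)·Δ²) = λ·ε/s, then Δ ≥ √((ln(λ·ε/s) − (1/2)·ln m − ln(ln(λ·ε/s)) − 2)/(2m−1)). -/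
/-!
Write `a = 2m - 1` and `X = λε/s`, so that `log X = log (2aΔ) + aΔ²`, and it suffices to bound
`log (2aΔ)` from above. If `2aΔ ≤ 1` this logarithm is nonpositive. Otherwise `aΔ² ≤ log X`, hence
`(2aΔ)² = 4a · aΔ² ≤ 4a log X`. In both cases `log (2aΔ) ≤ (1/2) log⁺ (4a log X)`.
-/

open Real

theorem log_sub_half_posLog_le {k x y : ℝ} (hk : 0 ≤ k) (hx : 0 < x) (hxy : x ^ 2 ≤ k * y) :
    log (x * exp y) - 1 / 2 * log⁺ (k * log (x * exp y)) ≤ y := by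
  have hlog : log (x * exp y) = log x + y := by
    rw [log_mul hx.ne' (exp_ne_zero y), log_exp]
  suffices log x ≤ 1 / 2 * log⁺ (k * log (x * exp y)) by linarith
  rcases le_total x 1 with hx1 | hx1
  · exact (log_nonpos hx.le hx1).trans (mul_nonneg one_half_pos.le posLog_nonneg)
  · have hy : y ≤ log (x * exp y) := by linarith [log_nonneg hx1]
    have hsq : x ^ 2 ≤ k * log (x * exp y) := hxy.trans (mul_le_mul_of_nonneg_left hy hk)
    calc log x = 1 / 2 * log (x ^ 2) := by rw [log_pow]; push_cast; ring
      _ ≤ 1 / 2 * log⁺ (x ^ 2) := by gcongr; exact le_max_right _ _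
      _ ≤ 1 / 2 * log⁺ (k * log (x * exp y)) := by gcongr

theorem half_posLog_le {m L : ℝ} (hm : 1 / 2 ≤ m) (hL : 1 ≤ L) :
    1 / 2 * log⁺ (4 * (2 * m - 1) * L) ≤ 1 / 2 * log m + log L + 2 := by
  have hm0 : 0 < m := by linarith
  have hL0 : 0 < L := by linarith
  have hnonneg : 0 ≤ 4 * (2 * m - 1) * L := mul_nonneg (by linarith) hL0.le
  have hle : 4 * (2 * m - 1) * L ≤ 8 * m * L := mul_le_mul_of_nonneg_right (by linarith) hL0.le
  have hone : 1 ≤ 8 * m * L := one_le_mul_of_one_le_of_one_le (by linarith) hL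
  have hlog8 : log 8 ≤ 4 := by
    rw [show (8 : ℝ) = 2 ^ 3 by norm_num, log_pow]
    push_cast
    linarith [log_two_lt_d9]
  have hposLog : log⁺ (4 * (2 * m - 1) * L) ≤ log 8 + log m + log L :=
    calc log⁺ (4 * (2 * m - 1) * L) ≤ log⁺ (8 * m * L) := posLog_le_posLog hnonneg hle
      _ = log (8 * m * L) := posLog_eq_log (hone.trans (le_abs_self _))
      _ = log 8 + log m + log L := by
        rw [log_mul (by positivity) hL0.ne', log_mul (by norm_num) hm0.ne']
  linarith [log_nonneg hL]

theorem delta_lower_bound_general {m X Δ : ℝ} (hm : 1 / 2 < m) (hX : exp 1 ≤ X)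
    (heq : 2 * (2 * m - 1) * Δ * exp ((2 * m - 1) * Δ ^ 2) = X) :
    √((log X - 1 / 2 * log m - log (log X) - 2) / (2 * m - 1)) ≤ Δ := by
  have hX0 : 0 < X := (exp_pos 1).trans_le hX
  have hlogX : 1 ≤ log X := (le_log_iff_exp_le hX0).2 hX
  have ha : 0 < 2 * m - 1 := by linarith
  have hx : 0 < 2 * (2 * m - 1) * Δ := pos_of_mul_pos_left (heq ▸ hX0) (exp_pos _).le
  have hΔ : 0 < Δ := pos_of_mul_pos_right hx (by positivity)
  have hlower : log X - 1 / 2 * log⁺ (4 * (2 * m - 1) * log X) ≤ (2 * m - 1) * Δ ^ 2 := by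
    have hsq : (2 * (2 * m - 1) * Δ) ^ 2 ≤ 4 * (2 * m - 1) * ((2 * m - 1) * Δ ^ 2) :=
      le_of_eq (by ring)
    simpa only [heq] using log_sub_half_posLog_le (by positivity) hx hsq
  rw [sqrt_le_left hΔ.le, div_le_iff₀' ha]
  linarith [half_posLog_le hm.le hlogX]

/-- Lemma 4: lower bound on the implicitly defined quantity `Δ_i(λ)`. -/
theorem delta_lower_bound
    (m : ℕ) (hm : 1 ≤ m) (s ε lam : ℝ) (hs : 0 < s) (hε : s ≤ ε)
    (hlam : Real.exp 1 ≤ lam) (Δ : ℝ) (hΔ : 0 ≤ Δ)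
    (heq : 2 * (2 * (m : ℝ) - 1) * Δ * Real.exp ((2 * (m : ℝ) - 1) * Δ ^ 2)
      = lam * ε / s) :
    Real.sqrt ((Real.log (lam * ε / s) - (1 / 2) * Real.log m
        - Real.log (Real.log (lam * ε / s)) - 2) / (2 * (m : ℝ) - 1)) ≤ Δ := by
  have hm_half : (1 / 2 : ℝ) < m := one_half_lt_one.trans_le (by exact_mod_cast hm)
  have hX : exp 1 ≤ lam * ε / s :=
    (le_div_iff₀ hs).2 (mul_le_mul hlam hε hs.le ((exp_pos 1).le.trans hlam))
  exact delta_lower_bound_general hm_half hX heq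
end

section
/- Let I be a finite index set, m ≥ 1 a natural number, and δ ∈ (0,1] a real number with ln(1/δ) ≤ 2m. Let S be a pmf on I with S i > 0 for every i ∈ I, and let E be a pmf on I with D_KL(E‖S) ≤ 2m. Set x = 64·e²·m^{5/2}/δ. Suppose Δ : I → ℝ satisfies Δ i ≥ 0 and 2·(2m−1)·(Δ i)·exp((2m−1)·(Δ i)²) = x·(E i)/(S i) for every i ∈ I, and that x·(E i)/(S i) ≥ e for every i with E i > 0. Then ∑_{i∈I} S i·exp((2m−1)·(Δ i)²) ≥ 4m/δ. -/
/-- KL divergence of pmfs on a finite index set: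
`D_KL(P‖Q) = ∑_{i : P i > 0} P i · ln(P i / Q i)`. -/
noncomputable def klDiv {I : Type*} [Fintype I] (P Q : I → ℝ) : ℝ :=
  ∑ i ∈ Finset.univ.filter (fun i => 0 < P i), P i * Real.log (P i / Q i)

/-!
Write `a = 2m - 1` and `Z = ∑ i, S i * exp (a * Δ i ^ 2)`. The weights `S i * exp (a * Δ i ^ 2) / Z`
form a pmf under which `Δ` has mean `x / (2aZ)`, and Jensen's inequality for the cube under this
pmf gives `(x / (2aZ)) ^ 2 ≤ ∑ i, E i * Δ i ^ 2`. The Donsker–Varadhan inequality bounds the same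
second moment from above by `(D_KL(E‖S) + log Z) / a`. Hence `x ^ 2 ≤ 4aZ² (D_KL(E‖S) + log Z)`,
which forces `Z` to be large.
-/

lemma mul_log_div_le_sub {p q : ℝ} (hp : 0 ≤ p) (hq : 0 < q) : p * Real.log (q / p) ≤ q - p := by
  rcases hp.eq_or_lt with rfl | hp
  · simpa using hq.le
  calc p * Real.log (q / p) ≤ p * (q / p - 1) := by
        gcongr
        exact Real.log_le_sub_one_of_pos (div_pos hq hp)
    _ = q - p := by field_simp

section Pmf

variable {I : Type*} [Fintype I]

lemma nonempty_of_sum_eq_one {P : I → ℝ} (hP : ∑ i, P i = 1) : Nonempty I :=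
  Finset.univ_nonempty_iff.mp (Finset.nonempty_of_sum_ne_zero (hP.trans_ne one_ne_zero))

lemma sum_mul_exp_pos [Nonempty I] {Q : I → ℝ} (hQ : ∀ i, 0 < Q i) (f : I → ℝ) :
    0 < ∑ i, Q i * Real.exp (f i) :=
  Finset.sum_pos (fun i _ => mul_pos (hQ i) (Real.exp_pos _)) Finset.univ_nonempty

lemma klDiv_eq_sum {P : I → ℝ} (hP : ∀ i, 0 ≤ P i) (Q : I → ℝ) :
    klDiv P Q = ∑ i, P i * Real.log (P i / Q i) :=
  Finset.sum_filter_of_ne fun i _ hi => (hP i).lt_of_ne' (left_ne_zero_of_mul hi)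

lemma sum_mul_le_klDiv_add_log_sum_exp {P Q : I → ℝ} (hP0 : ∀ i, 0 ≤ P i) (hP1 : ∑ i, P i = 1)
    (hQ : ∀ i, 0 < Q i) (f : I → ℝ) :
    ∑ i, P i * f i ≤ klDiv P Q + Real.log (∑ i, Q i * Real.exp (f i)) := by
  set Z := ∑ i, Q i * Real.exp (f i) with hZ
  have : Nonempty I := nonempty_of_sum_eq_one hP1
  have hZ0 : 0 < Z := sum_mul_exp_pos hQ f
  have pointwise (i : I) : P i * f i - P i * Real.log (P i / Q i) - P i * Real.log Z ≤
      Q i * Real.exp (f i) / Z - P i := by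
    have hq : 0 < Q i * Real.exp (f i) / Z := div_pos (mul_pos (hQ i) (Real.exp_pos _)) hZ0
    refine le_trans (le_of_eq ?_) (mul_log_div_le_sub (hP0 i) hq)
    rcases (hP0 i).eq_or_lt with h | h
    · simp [← h]
    rw [Real.log_div hq.ne' h.ne', Real.log_div (mul_pos (hQ i) (Real.exp_pos _)).ne' hZ0.ne',
      Real.log_mul (hQ i).ne' (Real.exp_ne_zero _), Real.log_exp, Real.log_div h.ne' (hQ i).ne']
    ring
  have summed := Finset.sum_le_sum fun i (_ : i ∈ Finset.univ) => pointwise i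
  simp only [Finset.sum_sub_distrib, ← Finset.sum_mul, ← Finset.sum_div, hP1, ← hZ,
    div_self hZ0.ne', ← klDiv_eq_sum hP0] at summed
  linarith

lemma sq_le_sum_mul_sq_of_mul_eq {p q t : I → ℝ} {y : ℝ} (hp : ∑ i, p i = 1)
    (hq0 : ∀ i, 0 ≤ q i) (hq1 : ∑ i, q i = 1) (ht : ∀ i, 0 ≤ t i) (hy : 0 < y)
    (h : ∀ i, q i * t i = y * p i) :
    y ^ 2 ≤ ∑ i, p i * t i ^ 2 := by
  have mean : ∑ i, q i * t i = y := by simp only [h, ← Finset.mul_sum, hp, mul_one]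
  have third_moment : ∑ i, q i * t i ^ 3 = y * ∑ i, p i * t i ^ 2 := by
    rw [Finset.mul_sum]
    exact Finset.sum_congr rfl fun i _ => by linear_combination t i ^ 2 * h i
  refine le_of_mul_le_mul_left ?_ hy
  calc y * y ^ 2 = (∑ i, q i * t i) ^ 3 := by rw [mean]; ring
    _ ≤ ∑ i, q i * t i ^ 3 :=
      Real.pow_arith_mean_le_arith_mean_pow _ q t (fun i _ => hq0 i) hq1 (fun i _ => ht i) 3
    _ = y * ∑ i, p i * t i ^ 2 := third_moment

lemma sq_le_mul_klDiv_add_log_sum_exp {S E Δ : I → ℝ} {a x : ℝ} (ha : 0 < a) (hx : 0 < x)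
    (hS : ∀ i, 0 < S i) (hE0 : ∀ i, 0 ≤ E i) (hE1 : ∑ i, E i = 1) (hΔ : ∀ i, 0 ≤ Δ i)
    (hstat : ∀ i, 2 * a * Δ i * Real.exp (a * Δ i ^ 2) = x * E i / S i) :
    x ^ 2 ≤ 4 * a * (∑ i, S i * Real.exp (a * Δ i ^ 2)) ^ 2 *
      (klDiv E S + Real.log (∑ i, S i * Real.exp (a * Δ i ^ 2))) := by
  have hw (i : I) : 0 < S i * Real.exp (a * Δ i ^ 2) := mul_pos (hS i) (Real.exp_pos _)
  have : Nonempty I := nonempty_of_sum_eq_one hE1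
  set Z := ∑ i, S i * Real.exp (a * Δ i ^ 2)
  have hZ0 : 0 < Z := sum_mul_exp_pos hS fun i => a * Δ i ^ 2
  have upper : ∑ i, E i * (a * Δ i ^ 2) ≤ klDiv E S + Real.log Z :=
    sum_mul_le_klDiv_add_log_sum_exp hE0 hE1 hS fun i => a * Δ i ^ 2
  have lower : (x / (2 * a * Z)) ^ 2 ≤ ∑ i, E i * Δ i ^ 2 := by
    refine sq_le_sum_mul_sq_of_mul_eq (q := fun i => S i * Real.exp (a * Δ i ^ 2) / Z) hE1
      (fun i => (div_pos (hw i) hZ0).le) ?_ hΔ (by positivity) fun i => ?_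
    · rw [← Finset.sum_div, div_self hZ0.ne']
    · have hstat_i := (eq_div_iff (hS i).ne').mp (hstat i)
      field_simp
      linear_combination hstat_i
  calc x ^ 2 = 4 * a * Z ^ 2 * (a * (x / (2 * a * Z)) ^ 2) := by field_simp; ring
    _ ≤ 4 * a * Z ^ 2 * (a * ∑ i, E i * Δ i ^ 2) := by gcongr
    _ = 4 * a * Z ^ 2 * ∑ i, E i * (a * Δ i ^ 2) := by
      simp only [Finset.mul_sum, mul_left_comm a]
    _ ≤ 4 * a * Z ^ 2 * (klDiv E S + Real.log Z) := by gcongr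

end Pmf

lemma four_mul_div_le_of_sq_le {m δ x Z : ℝ} (hm : 1 / 2 < m) (hδ0 : 0 < δ)
    (hδm : Real.log (1 / δ) ≤ 2 * m) (hx : 32 * m ^ 2 / δ ≤ x) (hZ0 : 0 < Z)
    (h : x ^ 2 ≤ 4 * (2 * m - 1) * Z ^ 2 * (2 * m + Real.log Z)) :
    4 * m / δ ≤ Z := by
  by_contra! hZ
  have hm0 : 0 < m := by linarith
  have ha : 0 < 2 * m - 1 := by linarith
  have hlogZ : Real.log Z ≤ 6 * m := by
    calc Real.log Z ≤ Real.log (4 * m * (1 / δ)) := by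
          rw [mul_one_div]
          exact Real.log_le_log hZ0 hZ.le
      _ = Real.log (4 * m) + Real.log (1 / δ) :=
        Real.log_mul (mul_pos four_pos hm0).ne' (one_div_pos.mpr hδ0).ne'
      _ ≤ 4 * m + 2 * m := add_le_add (Real.log_le_self (by positivity)) hδm
      _ = 6 * m := by ring
  refine h.not_gt ?_
  calc 4 * (2 * m - 1) * Z ^ 2 * (2 * m + Real.log Z)
      ≤ 4 * (2 * m - 1) * Z ^ 2 * (2 * m + 6 * m) := by gcongr
    _ < 4 * (2 * m) * (4 * m / δ) ^ 2 * (2 * m + 6 * m) := by gcongr; linarith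
    _ = (32 * m ^ 2 / δ) ^ 2 := by ring
    _ ≤ x ^ 2 := by gcongr

lemma mul_sq_le_mul_exp_one_sq_mul_rpow {m : ℝ} (hm : 1 ≤ m) :
    32 * m ^ 2 ≤ 64 * Real.exp 1 ^ 2 * m ^ ((5 : ℝ) / 2) := by
  have hpow : m ^ 2 ≤ m ^ ((5 : ℝ) / 2) := by
    rw [← Real.rpow_two]
    exact Real.rpow_le_rpow_of_exponent_le hm (by norm_num)
  have hexp : 1 ≤ Real.exp 1 ^ 2 := one_le_pow₀ (Real.one_le_exp zero_le_one)
  gcongr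
  linarith

theorem lambda_star_bound_general {I : Type*} [Fintype I] {m δ x : ℝ} {S E Δ : I → ℝ}
    (hm : 1 / 2 < m) (hδ0 : 0 < δ) (hδm : Real.log (1 / δ) ≤ 2 * m)
    (hS : ∀ i, 0 < S i) (hE0 : ∀ i, 0 ≤ E i) (hE1 : ∑ i, E i = 1) (hKL : klDiv E S ≤ 2 * m)
    (hx : 32 * m ^ 2 / δ ≤ x) (hΔ : ∀ i, 0 ≤ Δ i)
    (hstat : ∀ i, 2 * (2 * m - 1) * Δ i * Real.exp ((2 * m - 1) * Δ i ^ 2) = x * E i / S i) :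
    4 * m / δ ≤ ∑ i, S i * Real.exp ((2 * m - 1) * Δ i ^ 2) := by
  have ha : 0 < 2 * m - 1 := by linarith
  have hx0 : 0 < x := lt_of_lt_of_le (by positivity) hx
  have : Nonempty I := nonempty_of_sum_eq_one hE1
  refine four_mul_div_le_of_sq_le hm hδ0 hδm hx (sum_mul_exp_pos hS _) ?_
  exact (sq_le_mul_klDiv_add_log_sum_exp ha hx0 hS hE0 hE1 hΔ hstat).trans (by gcongr)

/-- Lemma 5: at `x = 64·e²·m^{5/2}/δ`, the value `h(x) = ∑ i, S i·exp((2m−1)·Δ_i(x)²)`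
is at least `4m/δ` (hence `λ* ≤ 64·e²·m^{5/2}/δ`). -/
theorem lambda_star_bound
    {I : Type*} [Fintype I]
    (m : ℕ) (hm : 1 ≤ m)
    (δ : ℝ) (hδ0 : 0 < δ) (hδ1 : δ ≤ 1) (hδm : Real.log (1 / δ) ≤ 2 * (m : ℝ))
    (S : I → ℝ) (hS0 : ∀ i, 0 < S i) (hS1 : ∑ i, S i = 1)
    (E : I → ℝ) (hE0 : ∀ i, 0 ≤ E i) (hE1 : ∑ i, E i = 1)
    (hKL : klDiv E S ≤ 2 * (m : ℝ))
    (x : ℝ) (hx : x = 64 * Real.exp 1 ^ 2 * (m : ℝ) ^ ((5 : ℝ) / 2) / δ)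
    (Δ : I → ℝ) (hΔ0 : ∀ i, 0 ≤ Δ i)
    (hstat : ∀ i, 2 * (2 * (m : ℝ) - 1) * Δ i * Real.exp ((2 * (m : ℝ) - 1) * (Δ i) ^ 2)
      = x * E i / S i)
    (hbig : ∀ i, 0 < E i → Real.exp 1 ≤ x * E i / S i) :
    4 * (m : ℝ) / δ ≤ ∑ i, S i * Real.exp ((2 * (m : ℝ) - 1) * (Δ i) ^ 2) := by
  have hm1 : (1 : ℝ) ≤ m := by exact_mod_cast hm
  exact lambda_star_bound_general (by linarith) hδ0 hδm hS0 hE0 hE1 hKL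
    (hx ▸ div_le_div_of_nonneg_right (mul_sq_le_mul_exp_one_sq_mul_rpow hm1) hδ0.le) hΔ0 hstat
end

section
/- Let I be a finite index set, m ≥ 1 a natural number, and δ ∈ (0,1] a real number with ln(1/δ) ≤ 2m. Let S be a pmf on I with S i > 0 for every i ∈ I, and let E be a pmf on I with D_KL(E‖S) ≤ 2m. Suppose γ : I → ℝ satisfies γ i ≥ 0 for every i ∈ I and ∑_{i∈I} S i·exp((2m−1)·(γ i)²) ≤ 4m/δ. Then ∑_{i∈I} (E i)·(γ i) ≤ ∑_{i∈I} E i·√((ln((E i)/(S i)) + ln(1/δ) + (5/2)·ln m + 8)/(2m−1)), where terms with E i = 0 contribute 0. -/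
/-!
Write `x = √(2m - 1) γ` and let `a` be the numerator under the square root. Since
`x - √a ≤ (x² - a) / (2√a)`, an exponential moment of `x² - a` controls `x - √a`, up to the
non-uniform weight `1 / √a`. That weight is removed by tangency at a reference scale `B`: the
inequality `3 / 2 ≤ B / √a + a / (2 B²)`, an equality at `a = B²`, leads to
`2 B (x - √a) + 3 / 2 ≤ 2 B exp (x² - a + 1) + a / (2 B²)`, whose average over the posterior `E`
gives `∑ E x ≤ ∑ E √a` as soon as `∑ E a ≤ B²` and `2 B ∑ E exp (x² - a + 1) ≤ 1`. The latter
follows from the bound on `∑ S exp ((2m - 1) γ²)` by a change of measure from `E` to `S`, and the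
scale `B = 4m` meets both conditions.
-/

section PointwiseBound

variable {a x s u B : ℝ}

theorem three_halves_le_inv_add_sq_div_two (hu : 0 < u) : 3 / 2 ≤ u⁻¹ + u ^ 2 / 2 :=
  calc 3 / 2 ≤ 3 / 2 + (u - 1) ^ 2 * (u + 2) / (2 * u) := le_add_of_nonneg_right (by positivity)
    _ = u⁻¹ + u ^ 2 / 2 := by
        field_simp
        ring

theorem two_mul_mul_sub_add_le_div_mul_exp (hB : 0 < B) (hs : 0 < s) :
    2 * B * (x - s) + 3 / 2 ≤ B / s * Real.exp (x ^ 2 - s ^ 2) + s ^ 2 / (2 * B ^ 2) := by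
  have hexp : 1 + 2 * s * (x - s) ≤ Real.exp (x ^ 2 - s ^ 2) := by
    linarith [Real.add_one_le_exp (x ^ 2 - s ^ 2), sq_nonneg (x - s)]
  have hratio := three_halves_le_inv_add_sq_div_two (div_pos hs hB)
  calc 2 * B * (x - s) + 3 / 2
      ≤ 2 * B * (x - s) + ((s / B)⁻¹ + (s / B) ^ 2 / 2) := by gcongr
    _ = B / s * (1 + 2 * s * (x - s)) + s ^ 2 / (2 * B ^ 2) := by
        field_simp
        ring
    _ ≤ B / s * Real.exp (x ^ 2 - s ^ 2) + s ^ 2 / (2 * B ^ 2) := by gcongr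

theorem two_mul_mul_add_le_mul_exp_of_le_one (hB : 1 ≤ B) (ha : a ≤ 1) :
    2 * B * x + 3 / 2 ≤ 2 * B * Real.exp (x ^ 2 - a + 1) + a / (2 * B ^ 2) := by
  have hexp : (1 + x ^ 2) + (1 - a) ≤ Real.exp (x ^ 2 - a + 1) := by
    linarith [Real.add_one_le_exp (x ^ 2 - a + 1)]
  have hx : 2 * B * x + 3 / 2 ≤ 2 * B * (1 + x ^ 2) := by
    nlinarith [mul_nonneg (by linarith : 0 ≤ B) (sq_nonneg (2 * x - 1))]
  have ha' : -a / (2 * B ^ 2) ≤ 2 * B * (1 - a) :=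
    calc -a / (2 * B ^ 2) ≤ (1 - a) / (2 * B ^ 2) := by gcongr; linarith
      _ ≤ 1 - a := div_le_self (by linarith) (by nlinarith)
      _ ≤ 2 * B * (1 - a) := le_mul_of_one_le_left (by linarith) (by linarith)
  calc 2 * B * x + 3 / 2
      ≤ 2 * B * (1 + x ^ 2) + (2 * B * (1 - a) - -a / (2 * B ^ 2)) := by linarith
    _ = 2 * B * ((1 + x ^ 2) + (1 - a)) + a / (2 * B ^ 2) := by ring
    _ ≤ 2 * B * Real.exp (x ^ 2 - a + 1) + a / (2 * B ^ 2) := by gcongr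

theorem two_mul_mul_sub_sqrt_add_le_mul_exp (hB : 1 ≤ B) :
    2 * B * (x - √a) + 3 / 2 ≤ 2 * B * Real.exp (x ^ 2 - a + 1) + a / (2 * B ^ 2) := by
  have hB0 : 0 < B := by linarith
  rcases le_total a 1 with ha | ha
  · calc 2 * B * (x - √a) + 3 / 2 ≤ 2 * B * x + 3 / 2 := by
          gcongr
          exact sub_le_self x (Real.sqrt_nonneg a)
      _ ≤ _ := two_mul_mul_add_le_mul_exp_of_le_one hB ha
  · have hs : 1 ≤ √a := Real.one_le_sqrt.mpr ha
    have hBs : B / √a ≤ 2 * B := (div_le_self hB0.le hs).trans (by linarith)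
    calc 2 * B * (x - √a) + 3 / 2
        ≤ B / √a * Real.exp (x ^ 2 - √a ^ 2) + √a ^ 2 / (2 * B ^ 2) :=
          two_mul_mul_sub_add_le_div_mul_exp hB0 (by linarith)
      _ = B / √a * Real.exp (x ^ 2 - a) + a / (2 * B ^ 2) := by
          rw [Real.sq_sqrt (by linarith)]
      _ ≤ 2 * B * Real.exp (x ^ 2 - a + 1) + a / (2 * B ^ 2) := by
          gcongr
          linarith

end PointwiseBound

theorem sum_mul_le_sum_mul_sqrt_of_sum_mul_exp_le {ι : Type*} {t : Finset ι}
    {p x a : ι → ℝ} {B : ℝ} (hp : ∀ i ∈ t, 0 ≤ p i) (hp1 : ∑ i ∈ t, p i = 1)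
    (hB : 1 ≤ B) (ha : ∑ i ∈ t, p i * a i ≤ B ^ 2)
    (hexp : 2 * B * ∑ i ∈ t, p i * Real.exp (x i ^ 2 - a i + 1) ≤ 1) :
    ∑ i ∈ t, p i * x i ≤ ∑ i ∈ t, p i * √(a i) := by
  have : 0 < B := by linarith
  have havg : (∑ i ∈ t, p i * a i) / (2 * B ^ 2) ≤ 1 / 2 := by
    rw [div_le_div_iff₀ (by positivity) two_pos]
    linarith
  have hsum : 2 * B * (∑ i ∈ t, p i * x i - ∑ i ∈ t, p i * √(a i)) + 3 / 2 ≤ 3 / 2 :=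
    calc 2 * B * (∑ i ∈ t, p i * x i - ∑ i ∈ t, p i * √(a i)) + 3 / 2
        = 2 * B * (∑ i ∈ t, p i * x i - ∑ i ∈ t, p i * √(a i)) + (∑ i ∈ t, p i) * (3 / 2) := by
          rw [hp1, one_mul]
      _ = ∑ i ∈ t, p i * (2 * B * (x i - √(a i)) + 3 / 2) := by
          rw [← Finset.sum_sub_distrib, Finset.mul_sum, Finset.sum_mul, ← Finset.sum_add_distrib]
          exact Finset.sum_congr rfl fun i _ => by ring
      _ ≤ ∑ i ∈ t, p i * (2 * B * Real.exp (x i ^ 2 - a i + 1) + a i / (2 * B ^ 2)) :=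
          Finset.sum_le_sum fun i hi =>
            mul_le_mul_of_nonneg_left (two_mul_mul_sub_sqrt_add_le_mul_exp hB) (hp i hi)
      _ = 2 * B * ∑ i ∈ t, p i * Real.exp (x i ^ 2 - a i + 1)
            + (∑ i ∈ t, p i * a i) / (2 * B ^ 2) := by
          rw [Finset.mul_sum, Finset.sum_div, ← Finset.sum_add_distrib]
          exact Finset.sum_congr rfl fun i _ => by ring
      _ ≤ 3 / 2 := by linarith
  exact sub_nonpos.mp (nonpos_of_mul_nonpos_right (by linarith) (by positivity : 0 < 2 * B))

section ChangeOfMeasure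

variable {I : Type*} [Fintype I] {E S : I → ℝ}

theorem klDiv_eq_sum_mul_log (hE : ∀ i, 0 ≤ E i) :
    klDiv E S = ∑ i, E i * Real.log (E i / S i) :=
  Finset.sum_filter_of_ne fun i _ hi => (hE i).lt_of_ne' (left_ne_zero_of_mul hi)

theorem sum_mul_exp_sub_log_div_le (hS : ∀ i, 0 ≤ S i) (hE : ∀ i, 0 ≤ E i)
    (hES : ∀ i, 0 < E i → 0 < S i) (f : I → ℝ) :
    ∑ i, E i * Real.exp (f i - Real.log (E i / S i)) ≤ ∑ i, S i * Real.exp (f i) := by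
  refine Finset.sum_le_sum fun i _ => ?_
  rcases (hE i).eq_or_lt with hEi | hEi
  · rw [← hEi, zero_mul]
    exact mul_nonneg (hS i) (Real.exp_pos _).le
  · have hSi := hES i hEi
    rw [Real.exp_sub, Real.exp_log (div_pos hEi hSi)]
    apply le_of_eq
    field_simp

theorem sum_mul_le_sum_mul_sqrt_of_klDiv_add_le {γ : I → ℝ} {n c A B : ℝ} (hn : 0 < n)
    (hS : ∀ i, 0 ≤ S i) (hE : ∀ i, 0 ≤ E i) (hE1 : ∑ i, E i = 1)
    (hES : ∀ i, 0 < E i → 0 < S i) (hγ : ∑ i, S i * Real.exp (n * γ i ^ 2) ≤ A)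
    (hB : 1 ≤ B) (hKL : klDiv E S + c ≤ B ^ 2) (hc : 2 * B * A ≤ Real.exp (c - 1)) :
    ∑ i, E i * γ i ≤ ∑ i, E i * √((Real.log (E i / S i) + c) / n) := by
  have hmean : ∑ i, E i * (Real.log (E i / S i) + c) ≤ B ^ 2 := by
    simpa only [mul_add, Finset.sum_add_distrib, ← Finset.sum_mul, hE1, one_mul,
      ← klDiv_eq_sum_mul_log hE] using hKL
  have hmoment : ∑ i, E i * Real.exp (n * γ i ^ 2 - Real.log (E i / S i)) ≤ A :=
    (sum_mul_exp_sub_log_div_le hS hE hES fun i => n * γ i ^ 2).trans hγ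
  have hexp : 2 * B * ∑ i, E i *
      Real.exp ((√n * γ i) ^ 2 - (Real.log (E i / S i) + c) + 1) ≤ 1 :=
    calc _ = 2 * B * (∑ i, E i * Real.exp (n * γ i ^ 2 - Real.log (E i / S i)))
            / Real.exp (c - 1) := by
          rw [mul_div_assoc, Finset.sum_div]
          congr 1
          refine Finset.sum_congr rfl fun i _ => ?_
          rw [mul_pow, Real.sq_sqrt hn.le, mul_div_assoc, ← Real.exp_sub]
          ring_nf
      _ ≤ 2 * B * A / Real.exp (c - 1) := by gcongr
      _ ≤ 1 := div_le_one_of_le₀ hc (Real.exp_pos _).le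
  have hscaled := sum_mul_le_sum_mul_sqrt_of_sum_mul_exp_le (fun i _ => hE i) hE1 hB hmean hexp
  calc ∑ i, E i * γ i = (∑ i, E i * (√n * γ i)) / √n := by
        rw [Finset.sum_div]
        exact Finset.sum_congr rfl fun i _ => by field_simp
    _ ≤ (∑ i, E i * √(Real.log (E i / S i) + c)) / √n := by gcongr
    _ = ∑ i, E i * √((Real.log (E i / S i) + c) / n) := by
        simp only [Finset.sum_div, Real.sqrt_div' _ hn.le, mul_div_assoc]

end ChangeOfMeasure

theorem thirty_two_mul_sq_le_exp {m : ℝ} (hm : 1 ≤ m) :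
    32 * m ^ 2 ≤ Real.exp (5 / 2 * Real.log m + 7) := by
  have hlog : 0 ≤ Real.log m := Real.log_nonneg hm
  have hexp7 : 32 ≤ Real.exp 7 := by
    linarith [Real.quadratic_le_exp_of_nonneg (by norm_num : (0 : ℝ) ≤ 7)]
  calc 32 * m ^ 2 ≤ Real.exp 7 * m ^ 2 := by gcongr
    _ = Real.exp (2 * Real.log m + 7) := by
        rw [Real.exp_add, two_mul, Real.exp_add, Real.exp_log (by linarith)]
        ring
    _ ≤ Real.exp (5 / 2 * Real.log m + 7) := by
        gcongr
        norm_num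

theorem pac_bayes_bound_general {I : Type*} [Fintype I] {m δ : ℝ} {S E γ : I → ℝ}
    (hm : 1 ≤ m) (hδ : 0 < δ) (hS : ∀ i, 0 ≤ S i) (hE : ∀ i, 0 ≤ E i) (hE1 : ∑ i, E i = 1)
    (hES : ∀ i, 0 < E i → 0 < S i) (hKL : klDiv E S + Real.log (1 / δ) ≤ 8 * m ^ 2)
    (hγ : ∑ i, S i * Real.exp ((2 * m - 1) * γ i ^ 2) ≤ 4 * m / δ) :
    ∑ i, E i * γ i ≤ ∑ i, E i * √((Real.log (E i / S i) + Real.log (1 / δ)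
      + 5 / 2 * Real.log m + 8) / (2 * m - 1)) := by
  have hmean : klDiv E S + (Real.log (1 / δ) + 5 / 2 * Real.log m + 8) ≤ (4 * m) ^ 2 := by
    nlinarith [Real.log_le_sub_one_of_pos (by linarith : 0 < m)]
  have hslack : 2 * (4 * m) * (4 * m / δ)
      ≤ Real.exp (Real.log (1 / δ) + 5 / 2 * Real.log m + 8 - 1) :=
    calc 2 * (4 * m) * (4 * m / δ) = 1 / δ * (32 * m ^ 2) := by ring
      _ ≤ 1 / δ * Real.exp (5 / 2 * Real.log m + 7) := by
          gcongr
          exact thirty_two_mul_sq_le_exp hm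
      _ = Real.exp (Real.log (1 / δ) + 5 / 2 * Real.log m + 8 - 1) := by
          rw [← Real.exp_log (one_div_pos.mpr hδ), ← Real.exp_add, Real.exp_log (by positivity)]
          ring_nf
  simpa only [add_assoc] using sum_mul_le_sum_mul_sqrt_of_klDiv_add_le
    (by linarith) hS hE hE1 hES hγ (by linarith) hmean hslack

/-- Deterministic core of Lemma 1: the event `∑ i, S i·exp((2m−1)·γ_i²) ≤ 4m/δ`
implies the PAC-Bayesian bound on `∑ i, E i·γ i`. -/
theorem pac_bayes_bound
    {I : Type*} [Fintype I]
    (m : ℕ) (hm : 1 ≤ m)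
    (δ : ℝ) (hδ0 : 0 < δ) (hδ1 : δ ≤ 1) (hδm : Real.log (1 / δ) ≤ 2 * (m : ℝ))
    (S : I → ℝ) (hS0 : ∀ i, 0 < S i) (hS1 : ∑ i, S i = 1)
    (E : I → ℝ) (hE0 : ∀ i, 0 ≤ E i) (hE1 : ∑ i, E i = 1)
    (hKL : klDiv E S ≤ 2 * (m : ℝ))
    (γ : I → ℝ) (hγ0 : ∀ i, 0 ≤ γ i)
    (hγ : ∑ i, S i * Real.exp ((2 * (m : ℝ) - 1) * (γ i) ^ 2) ≤ 4 * (m : ℝ) / δ) :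
    ∑ i, E i * γ i ≤ ∑ i, E i * Real.sqrt ((Real.log (E i / S i) + Real.log (1 / δ)
      + (5 / 2) * Real.log m + 8) / (2 * (m : ℝ) - 1)) :=
  pac_bayes_bound_general (Nat.one_le_cast.mpr hm) hδ0 (fun i => (hS0 i).le) hE0 hE1
    (fun i _ => hS0 i) (by nlinarith [(Nat.one_le_cast (α := ℝ)).mpr hm]) hγ
end

section
/- Let Y_u be a nonempty finite set, Y_e ⊆ Y_u a nonempty subset, m ≥ 1 a natural number, and δ ∈ (0,1] and π ∈ (0,1] real numbers. Let p̂ be a pmf on Y_u with p̂ y = 0 for every y ∉ Y_e, let v be the uniform pmf on Y_e (v y = 1/|Y_e| for y ∈ Y_e), and let u be the uniform pmf on Y_u (u y = 1/|Y_u|). If ∑_{y∈Y_e, p̂ y > 0} p̂ y·ln((p̂ y)/(v y)) ≤ √((ln(1/π) + ln(1/δ))/(2m)), then ∑_{y∈Y_e, p̂ y > 0} p̂ y·ln((p̂ y)/(u y)) ≤ √((ln(1/π) + ln(1/δ))/(2m)) − ln(|Y_e|/|Y_u|). -/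
/-!
Since `1 / |Y_e|` and `1 / |Y_u|` are both constant, replacing one reference by the other changes
`ln (p̂ y / ·)` by a constant, and averaging a constant against a pmf returns it. So the two
divergences differ by exactly `ln (|Y_e| / |Y_u|)`.
-/

theorem sum_mul_log_div_change_reference {ι : Type*} {s : Finset ι} (p : ι → ℝ) {u v : ι → ℝ}
    (hu : ∀ i ∈ s, u i ≠ 0) (hv : ∀ i ∈ s, v i ≠ 0) :
    ∑ i ∈ s, p i * Real.log (p i / u i)
      = ∑ i ∈ s, p i * Real.log (p i / v i) + ∑ i ∈ s, p i * Real.log (v i / u i) := by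
  rw [← Finset.sum_add_distrib]
  refine Finset.sum_congr rfl fun i hi => ?_
  obtain hp | hp := eq_or_ne (p i) 0
  · simp [hp]
  · rw [Real.log_div hp (hu i hi), Real.log_div hp (hv i hi), Real.log_div (hv i hi) (hu i hi)]
    ring

theorem sum_mul_log_div_change_uniform {ι : Type*} (s : Finset ι) (p : ι → ℝ) {a b : ℝ}
    (ha : a ≠ 0) (hb : b ≠ 0) :
    ∑ i ∈ s, p i * Real.log (p i / (1 / b))
      = ∑ i ∈ s, p i * Real.log (p i / (1 / a)) - (∑ i ∈ s, p i) * Real.log (a / b) := by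
  have log_ratio : Real.log (1 / a / (1 / b)) = -Real.log (a / b) := by
    rw [one_div, one_div, inv_div_inv, ← Real.log_inv, inv_div]
  rw [sum_mul_log_div_change_reference p (fun _ _ => one_div_ne_zero hb)
    (fun _ _ => one_div_ne_zero ha), ← Finset.sum_mul, log_ratio, mul_neg, ← sub_eq_add_neg]

theorem sum_filter_pos_eq_sum_univ {ι M : Type*} [Fintype ι] [AddCommMonoid M] [PartialOrder M]
    {s : Finset ι} {f : ι → M} [DecidablePred fun i => 0 < f i]
    (hf : ∀ i, 0 ≤ f i) (hs : ∀ i ∉ s, f i = 0) :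
    ∑ i ∈ s.filter (fun i => 0 < f i), f i = ∑ i, f i :=
  (Finset.sum_filter_of_ne fun i _ hi => (hf i).lt_of_ne' hi).trans
    (Finset.sum_subset s.subset_univ fun i _ => hs i)

theorem posterior_estimation_bound_uniform_general {Yu : Type*} [Fintype Yu] {Ye : Finset Yu}
    {phat : Yu → ℝ} (h0 : ∀ y, 0 ≤ phat y) (h1 : ∑ y, phat y = 1)
    (hsupp : ∀ y ∉ Ye, phat y = 0) (ε : ℝ) :
    ∑ y ∈ Ye.filter (fun y => 0 < phat y),
        phat y * Real.log (phat y / (1 / (Fintype.card Yu : ℝ)))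
      ≤ ε - Real.log ((Ye.card : ℝ) / (Fintype.card Yu : ℝ)) ↔
    ∑ y ∈ Ye.filter (fun y => 0 < phat y),
        phat y * Real.log (phat y / (1 / (Ye.card : ℝ))) ≤ ε := by
  have mass_pos : ∑ y ∈ Ye.filter (fun y => 0 < phat y), phat y = 1 :=
    (sum_filter_pos_eq_sum_univ h0 hsupp).trans h1
  obtain ⟨y, hy⟩ : Ye.Nonempty :=
    (Finset.nonempty_of_sum_ne_zero (mass_pos.trans_ne one_ne_zero)).mono (Finset.filter_subset _ _)
  have card_Ye_ne_zero : (Ye.card : ℝ) ≠ 0 := Nat.cast_ne_zero.mpr (Finset.card_ne_zero_of_mem hy)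
  have card_Yu_ne_zero : (Fintype.card Yu : ℝ) ≠ 0 :=
    Nat.cast_ne_zero.mpr (Fintype.card_pos_iff.mpr ⟨y⟩).ne'
  rw [sum_mul_log_div_change_uniform _ phat card_Ye_ne_zero card_Yu_ne_zero, mass_pos, one_mul,
    sub_le_sub_iff_right]

/-- Deterministic form of Theorem 2: if the KL divergence of the estimated posterior `p̂`
against the uniform distribution on the predicted class set `Y_e` is at most
`√((ln(1/π)+ln(1/δ))/(2m))`, then its KL divergence against the uniform distribution on
`Y_u` is at most `√((ln(1/π)+ln(1/δ))/(2m)) − ln(|Y_e|/|Y_u|)`. -/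
theorem posterior_estimation_bound_uniform
    {Yu : Type*} [Fintype Yu] [Nonempty Yu]
    (Ye : Finset Yu) (hYe : Ye.Nonempty)
    (m : ℕ) (hm : 1 ≤ m)
    (δ π : ℝ) (hδ0 : 0 < δ) (hδ1 : δ ≤ 1) (hπ0 : 0 < π) (hπ1 : π ≤ 1)
    (phat : Yu → ℝ) (h0 : ∀ y, 0 ≤ phat y) (h1 : ∑ y, phat y = 1)
    (hsupp : ∀ y ∉ Ye, phat y = 0)
    (hhyp : ∑ y ∈ Ye.filter (fun y => 0 < phat y),
        phat y * Real.log (phat y / (1 / (Ye.card : ℝ)))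
      ≤ Real.sqrt ((Real.log (1 / π) + Real.log (1 / δ)) / (2 * (m : ℝ)))) :
    ∑ y ∈ Ye.filter (fun y => 0 < phat y),
        phat y * Real.log (phat y / (1 / (Fintype.card Yu : ℝ)))
      ≤ Real.sqrt ((Real.log (1 / π) + Real.log (1 / δ)) / (2 * (m : ℝ)))
        - Real.log ((Ye.card : ℝ) / (Fintype.card Yu : ℝ)) :=
  (posterior_estimation_bound_uniform_general h0 h1 hsupp _).mpr hhyp
end
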